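/- Let c, k > 0, let T̂ ∈ (0, ∞] and set τ̂ = min{1, T̂/2}. Suppose y : [0, T̂) → [0,∞) is continuous on [0, T̂) and continuously differentiable on (0, T̂), z : [0, T̂) → [0,∞) is locally integrable, and (i) y'(t) + c·y(t) ≤ z(t) for all t ∈ (0, T̂), (ii) ∫_t^{t+τ̂} z(s) ds ≤ k for all t ∈ (0, T̂ - τ̂). Then y(t) ≤ y(0) + 2k + k/c for all t ∈ (0, T̂). -/

import Mathlib

open MeasureTheory
open scoped ENNReal

open Set Filter Topology

/-- Integrated form of the differential inequality `y' + c y ≤ z` with `z ≥ 0`. -/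
theorem le_exp_mul_add_integral_of_deriv_add_mul_le {c a b : ℝ} (hc : 0 ≤ c) (hab : a ≤ b)
    {y y' z : ℝ → ℝ} (hy : ContinuousOn y (Icc a b))
    (hderiv : ∀ t ∈ Ioo a b, HasDerivAt y (y' t) t)
    (hz : IntervalIntegrable z volume a b) (hz_nonneg : ∀ t ∈ Ioo a b, 0 ≤ z t)
    (hineq : ∀ t ∈ Ioo a b, y' t + c * y t ≤ z t) :
    y b ≤ Real.exp (-(c * (b - a))) * y a + ∫ s in a..b, z s := by
  have hweighted : Real.exp (c * (b - b)) * y b - Real.exp (c * (a - b)) * y a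
      ≤ ∫ s in a..b, z s := by
    refine intervalIntegral.sub_le_integral_of_hasDeriv_right_of_le
      (g := fun t => Real.exp (c * (t - b)) * y t)
      (g' := fun t => Real.exp (c * (t - b)) * (y' t + c * y t)) hab ?_ ?_
      ((intervalIntegrable_iff_integrableOn_Icc_of_le hab).1 hz) ?_
    · exact ContinuousOn.mul (by fun_prop) hy
    · intro t ht
      have hexp : HasDerivAt (fun t => Real.exp (c * (t - b)))
          (Real.exp (c * (t - b)) * (c * 1)) t :=
        (((hasDerivAt_id t).sub_const b).const_mul c).exp
      exact ((hexp.mul (hderiv t ht)).congr_deriv (by ring)).hasDerivWithinAt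
    · intro t ht
      have hle : Real.exp (c * (t - b)) ≤ 1 :=
        Real.exp_le_one_iff.2 (mul_nonpos_of_nonneg_of_nonpos hc (by linarith [ht.2]))
      calc Real.exp (c * (t - b)) * (y' t + c * y t)
          ≤ Real.exp (c * (t - b)) * z t :=
            mul_le_mul_of_nonneg_left (hineq t ht) (Real.exp_pos _).le
        _ ≤ z t := mul_le_of_le_one_left (hz_nonneg t ht) hle
  have hba : c * (a - b) = -(c * (b - a)) := by ring
  rw [hba, sub_self, mul_zero, Real.exp_zero, one_mul] at hweighted
  linarith

theorem stmt_4 (c k : ℝ) (hc : 0 < c) (hk : 0 < k)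
    (T : ℝ≥0∞) (hT : 0 < T)
    (τ : ℝ) (hτ : τ = if T = ⊤ then 1 else min 1 (T.toReal / 2))
    (y y' z : ℝ → ℝ)
    (hy_nonneg : ∀ t : ℝ, 0 ≤ t → ENNReal.ofReal t < T → 0 ≤ y t)
    (hy_cont : ContinuousOn y {t : ℝ | 0 ≤ t ∧ ENNReal.ofReal t < T})
    (hy_deriv : ∀ t : ℝ, 0 < t → ENNReal.ofReal t < T → HasDerivAt y (y' t) t)
    (hy'_cont : ContinuousOn y' {t : ℝ | 0 < t ∧ ENNReal.ofReal t < T})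
    (hz_nonneg : ∀ t : ℝ, 0 ≤ t → ENNReal.ofReal t < T → 0 ≤ z t)
    (hz_int : ∀ t₁ t₂ : ℝ, 0 ≤ t₁ → t₁ ≤ t₂ → ENNReal.ofReal t₂ < T →
      IntervalIntegrable z volume t₁ t₂)
    (hineq : ∀ t : ℝ, 0 < t → ENNReal.ofReal t < T → y' t + c * y t ≤ z t)
    (hzk : ∀ t : ℝ, 0 < t → ENNReal.ofReal t + ENNReal.ofReal τ < T →
      ∫ s in t..(t + τ), z s ≤ k) :
    ∀ t : ℝ, 0 < t → ENNReal.ofReal t < T → y t ≤ y 0 + 2 * k + k / c := by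
  have below : ∀ {r s : ℝ}, r ≤ s → ENNReal.ofReal s < T → ENNReal.ofReal r < T :=
    fun h hs => (ENNReal.ofReal_le_ofReal h).trans_lt hs
  obtain ⟨hτ_pos, hτT, hτ_cases⟩ : 0 < τ ∧ ENNReal.ofReal τ < T ∧
      (τ = 1 ∨ ∀ t, 0 ≤ t → ENNReal.ofReal t < T → t ≤ 2 * τ) := by
    by_cases hTop : T = ⊤
    · simp [hτ, hTop]
    · rw [if_neg hTop] at hτ
      have hTr : 0 < T.toReal := ENNReal.toReal_pos hT.ne' hTop
      have hτ_le : τ ≤ T.toReal / 2 := hτ ▸ min_le_right _ _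
      have hτ_pos : 0 < τ := hτ ▸ lt_min one_pos (half_pos hTr)
      refine ⟨hτ_pos, ?_, ?_⟩
      · exact (ENNReal.ofReal_lt_iff_lt_toReal hτ_pos.le hTop).2 (by linarith)
      · rcases min_choice 1 (T.toReal / 2) with h | h
        · exact Or.inl (hτ.trans h)
        · refine Or.inr fun t ht0 ht => ?_
          have := (ENNReal.ofReal_lt_iff_lt_toReal ht0 hTop).1 ht
          linarith
  have step : ∀ a b : ℝ, 0 < a → a ≤ b → b ≤ a + τ → ENNReal.ofReal (a + τ) < T →
      y b ≤ Real.exp (-(c * (b - a))) * y a + k := by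
    intro a b ha hab hb haT
    have hbT := below hb haT
    have hint := hz_int a (a + τ) ha.le (hab.trans hb) haT
    have hmono : ∫ s in a..b, z s ≤ ∫ s in a..(a + τ), z s := by
      refine intervalIntegral.integral_mono_interval le_rfl hab hb ?_ hint
      refine (ae_restrict_iff' measurableSet_Ioc).2 (Eventually.of_forall fun s hs => ?_)
      exact hz_nonneg s (ha.trans hs.1).le (below hs.2 haT)
    have hk_le := hzk a ha (by rwa [← ENNReal.ofReal_add ha.le hτ_pos.le])
    have := le_exp_mul_add_integral_of_deriv_add_mul_le hc.le hab
      (hy_cont.mono fun t ht => ⟨ha.le.trans ht.1, below ht.2 hbT⟩)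
      (fun t ht => hy_deriv t (ha.trans ht.1) (below ht.2.le hbT))
      (hz_int a b ha.le hab hbT)
      (fun t ht => hz_nonneg t (ha.trans ht.1).le (below ht.2.le hbT))
      (fun t ht => hineq t (ha.trans ht.1) (below ht.2.le hbT))
    linarith
  have initial : ∀ t : ℝ, 0 < t → t ≤ τ → y t ≤ y 0 + k := by
    intro t ht htτ
    have hopen : ∀ᶠ ε in 𝓝 (0 : ℝ), ENNReal.ofReal (ε + τ) < T := by
      have hcont : Continuous fun ε : ℝ => ENNReal.ofReal (ε + τ) :=
        ENNReal.continuous_ofReal.comp (continuous_add_const τ)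
      exact hcont.continuousAt.eventually_lt_const (by simpa using hτT)
    have hlim : Tendsto y (𝓝[>] 0) (𝓝 (y 0)) := by
      refine (hy_cont 0 ⟨le_rfl, by simpa using hT⟩).mono_left ?_
      refine nhdsWithin_le_iff.2 ?_
      filter_upwards [self_mem_nhdsWithin, nhdsWithin_le_nhds hopen] with ε hε hεT
      exact ⟨le_of_lt hε, below (by linarith) hεT⟩
    refine ge_of_tendsto (hlim.add_const k) ?_
    filter_upwards [self_mem_nhdsWithin, nhdsWithin_le_nhds hopen,
      nhdsWithin_le_nhds (Iio_mem_nhds ht)] with ε hε hεT hεt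
    have hε : 0 < ε := hε
    have hεt : ε < t := hεt
    have hexp : Real.exp (-(c * (t - ε))) ≤ 1 :=
      Real.exp_le_one_iff.2 (neg_nonpos.2 (mul_nonneg hc.le (by linarith)))
    have hy_le := mul_le_of_le_one_left (hy_nonneg ε hε.le (below (by linarith) hεT)) hexp
    linarith [step ε t hε hεt.le (by linarith) hεT]
  have translate : ∀ t : ℝ, τ < t → ENNReal.ofReal t < T →
      y t ≤ Real.exp (-(c * τ)) * y (t - τ) + k := by
    intro t ht htT
    simpa using step (t - τ) t (by linarith) (by linarith) (by linarith) (by simpa using htT)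
  have hkc : 0 < k / c := div_pos hk hc
  have hy0 : 0 ≤ y 0 := hy_nonneg 0 le_rfl (by simpa using hT)
  intro t ht htT
  rcases hτ_cases with hτ_one | hτ_half
  · subst hτ_one
    have hexp : Real.exp (-(c * 1)) ≤ 1 / (1 + c) := by
      rw [mul_one, Real.exp_neg, inv_eq_one_div]
      exact one_div_le_one_div_of_le (by linarith) (by linarith [Real.add_one_le_exp c])
    have hexp_one : Real.exp (-(c * 1)) ≤ 1 := Real.exp_le_one_iff.2 (by linarith)
    have bound : ∀ n : ℕ, ∀ t : ℝ, 0 < t → t ≤ n + 1 → ENNReal.ofReal t < T →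
        y t ≤ y 0 + (k + k / c) := by
      intro n
      induction n with
      | zero =>
        intro t ht htn _
        linarith [initial t ht (by simpa using htn)]
      | succ n ih =>
        intro t ht htn htT
        rcases le_or_gt t 1 with ht1 | ht1
        · linarith [initial t ht ht1]
        · push_cast at htn
          have hprev := ih (t - 1) (by linarith) (by linarith) (below (by linarith) htT)
          have hmul := mul_le_mul_of_nonneg_left hprev (Real.exp_pos (-(c * 1))).le
          have hfirst := mul_le_of_le_one_left hy0 hexp_one
          have hsecond : Real.exp (-(c * 1)) * (k + k / c) ≤ k / c :=
            calc Real.exp (-(c * 1)) * (k + k / c) ≤ 1 / (1 + c) * (k + k / c) :=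
                  mul_le_mul_of_nonneg_right hexp (by linarith)
              _ = k / c := by field_simp; ring
          linarith [translate t ht1 htT]
    obtain ⟨n, hn⟩ := exists_nat_ge t
    linarith [bound n t ht (by linarith) htT]
  · rcases le_or_gt t τ with htτ | htτ
    · linarith [initial t ht htτ]
    · have hexp : Real.exp (-(c * τ)) ≤ 1 :=
        Real.exp_le_one_iff.2 (neg_nonpos.2 (mul_nonneg hc.le hτ_pos.le))
      have hy_le := mul_le_of_le_one_left
        (hy_nonneg (t - τ) (by linarith) (below (by linarith) htT)) hexp
      linarith [translate t htτ htT, initial (t - τ) (by linarith) (by linarith [hτ_half t ht.le htT])]
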